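/- Let N ≥ 1, let q be a complex number with 0 < |q| < 1, and let F(X) := ∏_{j=1}^N E_q(X_j) be defined on the open polydisc {X ∈ ℂ^N : |X_j| < 1 for all j}. Fix a coordinate index j₀ ∈ {1,…,N}. Define functions G_r on the polydisc recursively by G_0 := F and G_{r+1}(X) := G_r(X) − q^{−r}·G_r(X'), where X' agrees with X except that its j₀-th coordinate is q·X_{j₀}. Then for every natural number m and every X in the polydisc, G_m(X) = X_{j₀}^m·F(X). -/

import Mathlib

/-!
The series in the exponent of `E_q` satisfies `S(x) - S(qx) = ∑ x^k / k = -log (1 - x)`, because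
the factors `1 - q^k` cancel termwise. Exponentiating gives the functional equation
`E_q(qx) = (1 - x) E_q(x)` (`qExp_mul_left`). Hence replacing `X_{j₀}` by `q X_{j₀}` multiplies
`F` by `1 - X_{j₀}`, and in the induction on `m` the factor `q^{-r}` cancels the `q^r` coming from
`(q X_{j₀})^r`, leaving `X_{j₀}^r (1 - (1 - X_{j₀})) F(X) = X_{j₀}^{r+1} F(X)`.
-/

/-- The q-exponential `E_q(x) = exp(∑_{k≥1} x^k/(k(1-q^k)))`, defined for `|x| < 1`. -/
noncomputable def qExp (q x : ℂ) : ℂ :=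
  Complex.exp (∑' k : ℕ, x ^ (k + 1) / ((k + 1 : ℂ) * (1 - q ^ (k + 1))))

lemma summable_qExp_exponent {q x : ℂ} (hq : ‖q‖ < 1) (hx : ‖x‖ < 1) :
    Summable fun k : ℕ => x ^ (k + 1) / ((k + 1 : ℂ) * (1 - q ^ (k + 1))) := by
  have hs : Summable fun k : ℕ => ‖x‖ ^ (k + 1) / (1 - ‖q‖) :=
    ((summable_nat_add_iff 1).2 (summable_geometric_of_lt_one (norm_nonneg x) hx)).div_const _
  refine Summable.of_norm_bounded hs fun k => ?_
  rw [norm_div, norm_pow, norm_mul]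
  have hk : (1 : ℝ) ≤ ‖(k + 1 : ℂ)‖ := by
    have : ‖((k + 1 : ℕ) : ℂ)‖ = ((k + 1 : ℕ) : ℝ) := Complex.norm_natCast _
    push_cast at this
    rw [this]
    linarith [(Nat.cast_nonneg k : (0 : ℝ) ≤ k)]
  have hden : 1 - ‖q‖ ≤ ‖1 - q ^ (k + 1)‖ := by
    have h1 : ‖(1 : ℂ)‖ - ‖q ^ (k + 1)‖ ≤ ‖1 - q ^ (k + 1)‖ := norm_sub_norm_le _ _
    have h2 : ‖q‖ ^ (k + 1) ≤ ‖q‖ := pow_le_of_le_one (norm_nonneg q) hq.le k.succ_ne_zero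
    rw [norm_one, norm_pow] at h1
    linarith
  have hpos : 0 < 1 - ‖q‖ := by linarith
  gcongr
  nlinarith [norm_nonneg (1 - q ^ (k + 1))]

/-- The functional equation `E_q(qx) = (1 - x) E_q(x)` of the `q`-exponential. -/
lemma qExp_mul_left {q x : ℂ} (hq : ‖q‖ < 1) (hx : ‖x‖ < 1) :
    qExp q (q * x) = (1 - x) * qExp q x := by
  have hqx : ‖q * x‖ < 1 := by
    rw [norm_mul]
    exact mul_lt_one_of_nonneg_of_lt_one_left (norm_nonneg q) hq hx.le
  have hlog : HasSum (fun k : ℕ => x ^ (k + 1) / (k + 1 : ℂ)) (-Complex.log (1 - x)) := by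
    have h := (hasSum_nat_add_iff' 1).2 (Complex.hasSum_taylorSeries_neg_log hx)
    simpa using h
  have hsub := (summable_qExp_exponent hq hx).hasSum.sub (summable_qExp_exponent hq hqx).hasSum
  have hterm : ∀ k : ℕ, x ^ (k + 1) / ((k + 1 : ℂ) * (1 - q ^ (k + 1)))
      - (q * x) ^ (k + 1) / ((k + 1 : ℂ) * (1 - q ^ (k + 1))) = x ^ (k + 1) / (k + 1 : ℂ) := by
    intro k
    have hk : (k + 1 : ℂ) ≠ 0 := Nat.cast_add_one_ne_zero k
    have hne : 1 - q ^ (k + 1) ≠ 0 := by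
      intro h
      have h1 : ‖q ^ (k + 1)‖ = 1 := by rw [← sub_eq_zero.1 h, norm_one]
      rw [norm_pow] at h1
      exact (pow_lt_one₀ (norm_nonneg q) hq k.succ_ne_zero).ne h1
    rw [← sub_div, mul_pow, div_eq_div_iff (mul_ne_zero hk hne) hk]
    ring
  simp only [hterm] at hsub
  have hne : 1 - x ≠ 0 := by
    intro h
    rw [← sub_eq_zero.1 h, norm_one] at hx
    exact lt_irrefl _ hx
  have hexp := eq_add_of_sub_eq' (hsub.unique hlog)
  unfold qExp
  rw [hexp, Complex.exp_add, Complex.exp_neg, Complex.exp_log hne]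
  field_simp

lemma prod_qExp_update {N : ℕ} {q : ℂ} (hq : ‖q‖ < 1) (j₀ : Fin N) {X : Fin N → ℂ}
    (hX : ‖X j₀‖ < 1) :
    ∏ j, qExp q (Function.update X j₀ (q * X j₀) j) = (1 - X j₀) * ∏ j, qExp q (X j) := by
  rw [← Finset.mul_prod_erase _ _ (Finset.mem_univ j₀),
    ← Finset.mul_prod_erase _ (fun j => qExp q (X j)) (Finset.mem_univ j₀),
    Function.update_self, qExp_mul_left hq hX, mul_assoc]
  congr 2
  refine Finset.prod_congr rfl fun j hj => ?_
  rw [Function.update_of_ne (Finset.ne_of_mem_erase hj)]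


/-- Multivariable version of the key step in the proof of Theorem 2:
with `F(X) = ∏_j E_q(X_j)` on the open polydisc, a fixed coordinate `j₀`, and
`G_0 = F`, `G_{r+1}(X) = G_r(X) − q^{−r}·G_r(X with X_{j₀} replaced by q X_{j₀})`,
one has `G_m(X) = X_{j₀}^m·F(X)`. -/
theorem qExp_difference_chain_multivariable (N : ℕ) (hN : 1 ≤ N)
    (q : ℂ) (hq0 : 0 < ‖q‖) (hq : ‖q‖ < 1) (j₀ : Fin N)
    (G : ℕ → (Fin N → ℂ) → ℂ)
    (h0 : ∀ X : Fin N → ℂ, (∀ j, ‖X j‖ < 1) → G 0 X = ∏ j, qExp q (X j))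
    (hrec : ∀ (r : ℕ) (X : Fin N → ℂ), (∀ j, ‖X j‖ < 1) →
      G (r + 1) X = G r X - q ^ (-(r : ℤ)) * G r (Function.update X j₀ (q * X j₀))) :
    ∀ (m : ℕ) (X : Fin N → ℂ), (∀ j, ‖X j‖ < 1) →
      G m X = X j₀ ^ m * ∏ j, qExp q (X j) := by
  intro m
  induction m with
  | zero =>
    intro X hX
    rw [h0 X hX, pow_zero, one_mul]
  | succ r ih =>
    intro X hX
    have hX' : ∀ j, ‖Function.update X j₀ (q * X j₀) j‖ < 1 := by
      intro j
      by_cases hj : j = j₀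
      · subst hj
        rw [Function.update_self, norm_mul]
        exact mul_lt_one_of_nonneg_of_lt_one_left (norm_nonneg q) hq (hX j).le
      · rw [Function.update_of_ne hj]
        exact hX j
    have hqr : q ^ r ≠ 0 := pow_ne_zero r (norm_pos_iff.1 hq0)
    rw [hrec r X hX, ih X hX, ih _ hX', prod_qExp_update hq j₀ (hX j₀), Function.update_self,
      mul_pow, zpow_neg, zpow_natCast]
    field_simp
    ring
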